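/- For all integers b ≥ 2, as b → ∞, I(b,0,2) = b·log b + ζ(2)/(2b⁵) + ζ(2)/b⁶ − ζ(3)/(2b⁷) − (15ζ(2) + 8ζ(3) − 3ζ(4))/(6b⁸) + O(b⁻⁹). -/

import Mathlib

open Filter Asymptotics

/-- The Irwin harmonic sum `I(b,d,k)`: sum of `1/m` over positive integers `m`
whose base-`b` digit list contains the digit `d` exactly `k` times. -/
noncomputable def irwinSum (b d k : ℕ) : ℝ :=
  ∑' m : ℕ, if 0 < m ∧ (Nat.digits b m).count d = k then (1 : ℝ) / m else 0

/-- `ζ(s) = ∑_{n ≥ 1} n^{-s}` for an integer exponent. -/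
noncomputable def zetaR (s : ℕ) : ℝ := ∑' n : ℕ, 1 / ((n : ℝ) + 1) ^ s

/-!
Let `T f n = ∑_{0 < a < b} f (b n + a)`, and let `U_k n` be the sum of `1 / m` over the `m` obtained
from `n` by appending digits, exactly `k` of them zero. Splitting on the first appended digit,
`U_0 n = 1 / n + T U_0 n` and `U_{k+1} n = U_k (b n) + T U_{k+1} n` for `n ≥ 1`, while splitting on
the leading digit gives `I(b, 0, k) = T U_k 0`.

The function `L n = b log (1 + 1 / n)` solves `L n = L (b n) + T L n`, so the deviation
`V_k = U_k - L` satisfies the same recursions, with the small source `1 / n - L (b n)` for `k = 0`.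
As `T` contracts functions of size `1 / n` by the factor `(b - 1) / b`, a comparison principle turns
a bound on the residual of an approximate solution into a bound on its error; this gives the
expansion of `V_k` in powers of `1 / n`, uniformly in `b`.

Finally `T L 0 = b log b`, and summing `V_{k+1} n = V_k (b n) + T V_{k+1} n` over `n ≥ 1`
telescopes: `I(b, 0, k + 1) - b log b = T V_{k+1} 0 = ∑_{n ≥ 1} (V_k (b n) - V_{k+1} (b n))`.
Inserting the expansions turns each power of `1 / n` into a zeta value.
-/

open Finset Topology

section

variable {b : ℕ}

/-! ### Appending digits -/

/-- The transfer operator `f ↦ (n ↦ ∑_{0 < a < b} f (b * n + a))`, which sums `f` over the numbers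
obtained by appending one nonzero base-`b` digit to `n`. -/
noncomputable def appendNonzero (b : ℕ) (f : ℕ → ℝ) (n : ℕ) : ℝ :=
  ∑ a ∈ Ico 1 b, f (b * n + a)

lemma appendNonzero_mono {f g : ℕ → ℝ} (h : ∀ n, 1 ≤ n → f n ≤ g n) (n : ℕ) :
    appendNonzero b f n ≤ appendNonzero b g n :=
  sum_le_sum fun _ ha => h _ ((mem_Ico.1 ha).1.trans (Nat.le_add_left _ _))

lemma appendNonzero_add (f g : ℕ → ℝ) (n : ℕ) :
    appendNonzero b (fun m => f m + g m) n = appendNonzero b f n + appendNonzero b g n :=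
  sum_add_distrib

lemma appendNonzero_sub (f g : ℕ → ℝ) (n : ℕ) :
    appendNonzero b (fun m => f m - g m) n = appendNonzero b f n - appendNonzero b g n :=
  sum_sub_distrib _ _

lemma appendNonzero_const_mul (c : ℝ) (f : ℕ → ℝ) (n : ℕ) :
    appendNonzero b (fun m => c * f m) n = c * appendNonzero b f n :=
  (mul_sum _ _ _).symm

lemma abs_appendNonzero_le (f : ℕ → ℝ) (n : ℕ) :
    |appendNonzero b f n| ≤ appendNonzero b (fun m => |f m|) n :=
  abs_sum_le_sum_abs _ _

lemma sum_Ico_mul_eq_add_appendNonzero (hb : 0 < b) (f : ℕ → ℝ) (n : ℕ) :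
    ∑ m ∈ Ico (b * n) (b * (n + 1)), f m = f (b * n) + appendNonzero b f n := by
  rw [sum_Ico_eq_sum_range, mul_add_one, Nat.add_sub_cancel_left, sum_range_eq_add_Ico _ hb]
  rfl

lemma sum_Ico_sum_Ico_of_monotone {M : Type*} [AddCommMonoid M] {u : ℕ → ℕ} (hu : Monotone u)
    (f : ℕ → M) {p q : ℕ} (hpq : p ≤ q) :
    ∑ n ∈ Ico p q, ∑ m ∈ Ico (u n) (u (n + 1)), f m = ∑ m ∈ Ico (u p) (u q), f m := by
  induction q, hpq using Nat.le_induction with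
  | base => simp
  | succ q hpq ih =>
    rw [sum_Ico_succ_top hpq, ih, sum_Ico_consecutive _ (hu hpq) (hu q.le_succ)]

/-- The sum of `w` over the numbers obtained by appending `l` arbitrary base-`b` digits to `n`. -/
noncomputable def levelSum (b : ℕ) (w : ℕ → ℝ) (l n : ℕ) : ℝ :=
  ∑ m ∈ Ico (b ^ l * n) (b ^ l * (n + 1)), w m

lemma sum_Ico_levelSum (w : ℕ → ℝ) (l : ℕ) {p q : ℕ} (hpq : p ≤ q) :
    ∑ n ∈ Ico p q, levelSum b w l n = ∑ m ∈ Ico (b ^ l * p) (b ^ l * q), w m :=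
  sum_Ico_sum_Ico_of_monotone (fun _ _ h => Nat.mul_le_mul_left _ h) w hpq

lemma levelSum_succ (hb : 0 < b) (w : ℕ → ℝ) (l n : ℕ) :
    levelSum b w (l + 1) n = levelSum b w l (b * n) + appendNonzero b (levelSum b w l) n := by
  rw [← sum_Ico_mul_eq_add_appendNonzero hb,
    sum_Ico_levelSum w l (Nat.mul_le_mul_left b n.le_succ), levelSum, pow_succ, mul_assoc,
    mul_assoc]

/-- The number of zeros in the base-`b` expansion of `n`. -/
def zeroCount (b n : ℕ) : ℕ := (Nat.digits b n).count 0

lemma zeroCount_mul (hb : 2 ≤ b) {n : ℕ} (hn : 1 ≤ n) :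
    zeroCount b (b * n) = zeroCount b n + 1 := by
  have h := Nat.digits_add b (by lia) 0 n (by lia) (Or.inr (by lia))
  rw [zero_add] at h
  rw [zeroCount, h, List.count_cons_self, zeroCount]

lemma zeroCount_mul_add {a : ℕ} (ha : a ∈ Ico 1 b) (n : ℕ) :
    zeroCount b (b * n + a) = zeroCount b n := by
  obtain ⟨ha1, hab⟩ := mem_Ico.1 ha
  rw [zeroCount, add_comm, Nat.digits_add b (by lia) a n hab (Or.inl (by lia)),
    List.count_cons_of_ne (by lia), zeroCount]

/-- The summand `1 / m` of the Irwin sum, restricted to the `m` with exactly `j` zeros. -/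
noncomputable def zeroWeight (b j m : ℕ) : ℝ := if zeroCount b m = j then 1 / (m : ℝ) else 0

lemma zeroWeight_nonneg (b j m : ℕ) : 0 ≤ zeroWeight b j m := by
  unfold zeroWeight
  positivity

lemma irwinSum_zero_eq_tsum_zeroWeight (b k : ℕ) :
    irwinSum b 0 k = ∑' m, zeroWeight b k m := by
  refine tsum_congr fun m => ?_
  rcases m.eq_zero_or_pos with rfl | hm
  · simp [zeroWeight]
  · simp [hm, zeroWeight, zeroCount]

/-- The sum of `1 / m` over the numbers `m` obtained by appending `l` base-`b` digits to `n`,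
exactly `k` of them equal to zero. -/
noncomputable def appendedLevelSum (b k l n : ℕ) : ℝ :=
  levelSum b (zeroWeight b (zeroCount b n + k)) l n

lemma appendedLevelSum_nonneg (b k l n : ℕ) : 0 ≤ appendedLevelSum b k l n := by
  unfold appendedLevelSum levelSum
  exact sum_nonneg fun _ _ => zeroWeight_nonneg _ _ _

lemma appendedLevelSum_level_zero (b k n : ℕ) :
    appendedLevelSum b k 0 n = if k = 0 then 1 / (n : ℝ) else 0 := by
  simp [appendedLevelSum, levelSum, zeroWeight]

lemma appendNonzero_appendedLevelSum (b k l n : ℕ) :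
    appendNonzero b (appendedLevelSum b k l) n =
      appendNonzero b (levelSum b (zeroWeight b (zeroCount b n + k)) l) n :=
  sum_congr rfl fun a ha => by rw [appendedLevelSum, zeroCount_mul_add ha]

lemma levelSum_zeroWeight_eq_zero_of_lt (hb : 2 ≤ b) (l : ℕ) {j n : ℕ} (hn : 1 ≤ n)
    (hj : j < zeroCount b n) : levelSum b (zeroWeight b j) l n = 0 := by
  induction l generalizing n with
  | zero => simp [levelSum, zeroWeight, hj.ne']
  | succ l ih =>
    have hzero : levelSum b (zeroWeight b j) l (b * n) = 0 :=
      ih (Nat.mul_pos (by lia) hn) (by rw [zeroCount_mul hb hn]; lia)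
    have hnonzero : appendNonzero b (levelSum b (zeroWeight b j) l) n = 0 :=
      sum_eq_zero fun a ha => ih (by have := mem_Ico.1 ha; lia) (by rwa [zeroCount_mul_add ha])
    rw [levelSum_succ (by lia), hzero, hnonzero, add_zero]

lemma appendedLevelSum_zero_succ (hb : 2 ≤ b) (l : ℕ) {n : ℕ} (hn : 1 ≤ n) :
    appendedLevelSum b 0 (l + 1) n = appendNonzero b (appendedLevelSum b 0 l) n := by
  rw [appendNonzero_appendedLevelSum, appendedLevelSum, levelSum_succ (by lia),
    levelSum_zeroWeight_eq_zero_of_lt hb l (Nat.mul_pos (by lia) hn)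
      (by rw [zeroCount_mul hb hn]; lia), zero_add]

lemma appendedLevelSum_succ_succ (hb : 2 ≤ b) (k l : ℕ) {n : ℕ} (hn : 1 ≤ n) :
    appendedLevelSum b (k + 1) (l + 1) n =
      appendedLevelSum b k l (b * n) + appendNonzero b (appendedLevelSum b (k + 1) l) n := by
  rw [appendNonzero_appendedLevelSum, appendedLevelSum, levelSum_succ (by lia), appendedLevelSum,
    zeroCount_mul hb hn, add_right_comm, add_assoc]

lemma appendNonzero_one_div_pow_le (hb : 1 ≤ b) (s : ℕ) {n : ℕ} (hn : 1 ≤ n) :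
    appendNonzero b (fun m => 1 / (m : ℝ) ^ s) n ≤ (b - 1) / (b * n : ℝ) ^ s := by
  calc appendNonzero b (fun m => 1 / (m : ℝ) ^ s) n
      ≤ ∑ _a ∈ Ico 1 b, 1 / (b * n : ℝ) ^ s := by
        refine sum_le_sum fun a _ => ?_
        push_cast
        gcongr
        exact le_add_of_nonneg_right a.cast_nonneg
    _ = (b - 1) / (b * n : ℝ) ^ s := by
        rw [sum_const, Nat.card_Ico, nsmul_eq_mul, Nat.cast_sub hb, Nat.cast_one, mul_one_div]

lemma appendNonzero_div_le (hb : 1 ≤ b) {C : ℝ} (hC : 0 ≤ C) {n : ℕ} (hn : 1 ≤ n) :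
    appendNonzero b (fun m => C / m) n ≤ (b - 1) / b * C / n := by
  have h := mul_le_mul_of_nonneg_left (appendNonzero_one_div_pow_le hb 1 hn) hC
  rw [← appendNonzero_const_mul] at h
  simp only [pow_one, mul_one_div] at h
  exact h.trans_eq (by field_simp)

lemma sum_appendNonzero (L : Finset ℕ) (f : ℕ → ℕ → ℝ) (n : ℕ) :
    ∑ l ∈ L, appendNonzero b (f l) n = appendNonzero b (fun m => ∑ l ∈ L, f l m) n :=
  sum_comm

lemma sum_range_appendedLevelSum_le (hb : 2 ≤ b) (L k : ℕ) {n : ℕ} (hn : 1 ≤ n) :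
    ∑ l ∈ range L, appendedLevelSum b k l n ≤ b / n := by
  induction L generalizing k n with
  | zero => simp only [range_zero, sum_empty]; positivity
  | succ L ih =>
    have hT : appendNonzero b (fun m => ∑ l ∈ range L, appendedLevelSum b k l m) n
        ≤ b / n - 1 / n := by
      refine (appendNonzero_mono (fun m hm => ih k hm) n).trans
        ((appendNonzero_div_le (by lia) b.cast_nonneg hn).trans_eq ?_)
      field_simp
    rw [sum_range_succ', appendedLevelSum_level_zero]
    rcases k with _ | k
    · simp only [appendedLevelSum_zero_succ hb _ hn, sum_appendNonzero, if_true]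
      linarith
    · have hbn : ∑ l ∈ range L, appendedLevelSum b k l (b * n) ≤ 1 / n := by
        refine (ih k (Nat.mul_pos (by lia) hn)).trans_eq ?_
        push_cast
        field_simp
      simp only [appendedLevelSum_succ_succ hb _ _ hn, sum_add_distrib, sum_appendNonzero,
        if_neg k.succ_ne_zero]
      linarith

/-- The sum of `1 / m` over the numbers `m` obtained by appending to `n` a finite (possibly empty)
string of base-`b` digits, exactly `k` of them equal to zero. -/
noncomputable def appendedSum (b k n : ℕ) : ℝ := ∑' l, appendedLevelSum b k l n

lemma summable_appendedLevelSum (hb : 2 ≤ b) (k : ℕ) {n : ℕ} (hn : 1 ≤ n) :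
    Summable fun l => appendedLevelSum b k l n :=
  summable_of_sum_range_le (fun l => appendedLevelSum_nonneg b k l n)
    fun L => sum_range_appendedLevelSum_le hb L k hn

lemma appendedSum_nonneg (b k n : ℕ) : 0 ≤ appendedSum b k n :=
  tsum_nonneg fun l => appendedLevelSum_nonneg b k l n

lemma appendedSum_le (hb : 2 ≤ b) (k : ℕ) {n : ℕ} (hn : 1 ≤ n) : appendedSum b k n ≤ b / n :=
  Real.tsum_le_of_sum_range_le (fun l => appendedLevelSum_nonneg b k l n)
    fun L => sum_range_appendedLevelSum_le hb L k hn

lemma hasSum_appendNonzero_appendedLevelSum (hb : 2 ≤ b) (k n : ℕ) :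
    HasSum (fun l => appendNonzero b (appendedLevelSum b k l) n)
      (appendNonzero b (appendedSum b k) n) :=
  hasSum_sum fun _ ha => (summable_appendedLevelSum hb k
    ((mem_Ico.1 ha).1.trans (Nat.le_add_left _ _))).hasSum

lemma appendedSum_zero (hb : 2 ≤ b) {n : ℕ} (hn : 1 ≤ n) :
    appendedSum b 0 n = 1 / n + appendNonzero b (appendedSum b 0) n := by
  rw [appendedSum, (summable_appendedLevelSum hb 0 hn).tsum_eq_zero_add,
    appendedLevelSum_level_zero, if_pos rfl]
  simp only [appendedLevelSum_zero_succ hb _ hn]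
  rw [(hasSum_appendNonzero_appendedLevelSum hb 0 n).tsum_eq]

lemma appendedSum_succ (hb : 2 ≤ b) (k : ℕ) {n : ℕ} (hn : 1 ≤ n) :
    appendedSum b (k + 1) n =
      appendedSum b k (b * n) + appendNonzero b (appendedSum b (k + 1)) n := by
  have hbn : 1 ≤ b * n := Nat.mul_pos (by lia) hn
  have hT := hasSum_appendNonzero_appendedLevelSum hb (k + 1) n
  rw [appendedSum, (summable_appendedLevelSum hb (k + 1) hn).tsum_eq_zero_add,
    appendedLevelSum_level_zero, if_neg k.succ_ne_zero, zero_add]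
  simp only [appendedLevelSum_succ_succ hb _ _ hn]
  rw [(summable_appendedLevelSum hb k hbn).tsum_add hT.summable, hT.tsum_eq, appendedSum]

lemma sum_range_appendNonzero_appendedLevelSum (hb : 2 ≤ b) (k L : ℕ) :
    ∑ l ∈ range L, appendNonzero b (appendedLevelSum b k l) 0 =
      ∑ m ∈ range (b ^ L), zeroWeight b k m := by
  have hlevel (l : ℕ) : appendNonzero b (appendedLevelSum b k l) 0 =
      ∑ m ∈ Ico (b ^ l) (b ^ (l + 1)), zeroWeight b k m := by
    have h := sum_Ico_levelSum (b := b) (zeroWeight b k) l (p := 1) (q := b) (by lia)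
    rw [mul_one, ← pow_succ] at h
    rw [appendNonzero_appendedLevelSum, ← h]
    simp [appendNonzero, zeroCount]
  simp only [hlevel]
  have hmono : Monotone fun l => b ^ l := pow_right_mono₀ (by lia)
  rw [range_eq_Ico, sum_Ico_sum_Ico_of_monotone hmono _ L.zero_le, range_eq_Ico, pow_zero,
    ← sum_Ico_consecutive _ zero_le_one (Nat.one_le_pow L b (by lia))]
  simp [zeroWeight]

lemma appendNonzero_appendedSum_zero (hb : 2 ≤ b) (k : ℕ) :
    appendNonzero b (appendedSum b k) 0 = irwinSum b 0 k := by
  have hlim := (hasSum_appendNonzero_appendedLevelSum hb k 0).tendsto_sum_nat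
  simp only [sum_range_appendNonzero_appendedLevelSum hb] at hlim
  rw [irwinSum_zero_eq_tsum_zeroWeight]
  refine (((hasSum_iff_tendsto_nat_of_nonneg (zeroWeight_nonneg b k) _).2 ?_).tsum_eq).symm
  refine (tendsto_iff_tendsto_subseq_of_monotone ?_ (tendsto_pow_atTop_atTop_of_one_lt hb)).2 hlim
  exact fun p q hpq => sum_le_sum_of_subset_of_nonneg (range_mono hpq)
    fun m _ _ => zeroWeight_nonneg b k m

/-! ### The logarithmic main term -/

/-- The main term of `appendedSum b k n`, the same for every `k`; it solves the homogeneous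
recursion `logProfile_eq_add_appendNonzero` exactly. -/
noncomputable def logProfile (b n : ℕ) : ℝ := b * (Real.log (n + 1) - Real.log n)

lemma logProfile_eq_mul_log {n : ℕ} (hn : 1 ≤ n) :
    logProfile b n = b * Real.log (1 + 1 / n) := by
  have hn0 : (n : ℝ) ≠ 0 := by positivity
  rw [logProfile, ← Real.log_div (by positivity) hn0, add_div, div_self hn0]

lemma logProfile_nonneg (b : ℕ) {n : ℕ} (hn : 1 ≤ n) : 0 ≤ logProfile b n := by
  rw [logProfile_eq_mul_log hn]
  exact mul_nonneg b.cast_nonneg (Real.log_nonneg (le_add_of_nonneg_right (by positivity)))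

lemma logProfile_le (b : ℕ) {n : ℕ} (hn : 1 ≤ n) : logProfile b n ≤ b / n := by
  rw [logProfile_eq_mul_log hn]
  refine (mul_le_mul_of_nonneg_left ?_ b.cast_nonneg).trans_eq (mul_one_div (b : ℝ) n)
  linarith [Real.log_le_sub_one_of_pos (show (0 : ℝ) < 1 + 1 / n by positivity)]

lemma appendNonzero_logProfile (hb : 1 ≤ b) (n : ℕ) :
    appendNonzero b (logProfile b) n = b * (Real.log (b * n + b) - Real.log (b * n + 1)) := by
  have h := sum_Ico_sub (fun a : ℕ => Real.log (b * n + a)) hb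
  simp only [Nat.cast_one, Nat.cast_add] at h
  rw [← h, mul_sum]
  refine sum_congr rfl fun a _ => ?_
  rw [logProfile]
  push_cast
  rw [add_assoc]

lemma logProfile_eq_add_appendNonzero (hb : 1 ≤ b) {n : ℕ} (hn : 1 ≤ n) :
    logProfile b n = logProfile b (b * n) + appendNonzero b (logProfile b) n := by
  have hb0 : (b : ℝ) ≠ 0 := by positivity
  have hn0 : (n : ℝ) ≠ 0 := by positivity
  rw [appendNonzero_logProfile hb, logProfile, logProfile, ← mul_add_one, Nat.cast_mul,
    Real.log_mul hb0 hn0, Real.log_mul hb0 (by positivity)]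
  ring

/-- The error of the approximation `logProfile b n` to `appendedSum b k n`. -/
noncomputable def deviation (b k n : ℕ) : ℝ := appendedSum b k n - logProfile b n

lemma abs_deviation_le (hb : 2 ≤ b) (k : ℕ) {n : ℕ} (hn : 1 ≤ n) : |deviation b k n| ≤ b / n :=
  abs_sub_le_of_nonneg_of_le (appendedSum_nonneg b k n) (appendedSum_le hb k hn)
    (logProfile_nonneg b hn) (logProfile_le b hn)

lemma appendNonzero_deviation (b k n : ℕ) : appendNonzero b (deviation b k) n =
    appendNonzero b (appendedSum b k) n - appendNonzero b (logProfile b) n :=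
  appendNonzero_sub _ _ n

lemma deviation_zero (hb : 2 ≤ b) {n : ℕ} (hn : 1 ≤ n) :
    deviation b 0 n = (1 / n - logProfile b (b * n)) + appendNonzero b (deviation b 0) n := by
  rw [appendNonzero_deviation, deviation, appendedSum_zero hb hn,
    logProfile_eq_add_appendNonzero (by lia) hn]
  ring

lemma deviation_succ (hb : 2 ≤ b) (k : ℕ) {n : ℕ} (hn : 1 ≤ n) :
    deviation b (k + 1) n = deviation b k (b * n) + appendNonzero b (deviation b (k + 1)) n := by
  rw [appendNonzero_deviation, deviation, deviation, appendedSum_succ hb k hn,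
    logProfile_eq_add_appendNonzero (by lia) hn]
  ring

lemma appendNonzero_deviation_zero (hb : 2 ≤ b) (k : ℕ) :
    appendNonzero b (deviation b k) 0 = irwinSum b 0 k - b * Real.log b := by
  rw [appendNonzero_deviation, appendNonzero_appendedSum_zero hb,
    appendNonzero_logProfile (by lia)]
  simp

/-! ### The comparison principle -/

lemma nonpos_of_le_appendNonzero (hb : 1 ≤ b) {D : ℕ → ℝ} {C : ℝ} (hC : 0 ≤ C)
    (hD : ∀ n, 1 ≤ n → D n ≤ C / n) (hsub : ∀ n, 1 ≤ n → D n ≤ appendNonzero b D n)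
    {n : ℕ} (hn : 1 ≤ n) : D n ≤ 0 := by
  set q : ℝ := (b - 1) / b with hq
  have hb' : (1 : ℝ) ≤ b := by exact_mod_cast hb
  have hq0 : 0 ≤ q := div_nonneg (by linarith) b.cast_nonneg
  have hq1 : q < 1 := (div_lt_one (by linarith)).2 (by linarith)
  have hpow (N : ℕ) : ∀ n, 1 ≤ n → D n ≤ q ^ N * C / n := by
    induction N with
    | zero => simpa using hD
    | succ N ih =>
      intro n hn
      refine (hsub n hn).trans ((appendNonzero_mono ih n).trans
        ((appendNonzero_div_le hb (by positivity) hn).trans_eq ?_))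
      rw [← hq, pow_succ']
      ring
  have hlim : Tendsto (fun N : ℕ => q ^ N * C / n) atTop (𝓝 0) := by
    simpa using ((tendsto_pow_atTop_nhds_zero_of_lt_one hq0 hq1).mul_const C).div_const (n : ℝ)
  exact ge_of_tendsto' hlim fun N => hpow N n hn

lemma abs_sub_le_of_residual_le (hb : 1 ≤ b) {V H p φ : ℕ → ℝ} {C : ℝ}
    (hV : ∀ n, 1 ≤ n → V n = H n + appendNonzero b V n)
    (hVp : ∀ n, 1 ≤ n → |V n - p n| ≤ C / n) (hφ : ∀ n, 0 ≤ φ n)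
    (hφT : ∀ n, 1 ≤ n → appendNonzero b φ n ≤ φ n / 2)
    (hres : ∀ n, 1 ≤ n → |H n + appendNonzero b p n - p n| ≤ φ n) {n : ℕ} (hn : 1 ≤ n) :
    |V n - p n| ≤ 2 * φ n := by
  have hC : 0 ≤ C := (abs_nonneg _).trans (by simpa using hVp 1 le_rfl)
  have herr (m : ℕ) (hm : 1 ≤ m) :
      |V m - p m| ≤ φ m + appendNonzero b (fun j => |V j - p j|) m := by
    have hsplit : V m - p m =
        (H m + appendNonzero b p m - p m) + appendNonzero b (fun j => V j - p j) m := by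
      rw [appendNonzero_sub]
      linear_combination hV m hm
    rw [hsplit]
    exact (abs_add_le _ _).trans (add_le_add (hres m hm) (abs_appendNonzero_le _ m))
  refine sub_nonpos.1 (nonpos_of_le_appendNonzero hb (D := fun m => |V m - p m| - 2 * φ m) hC
    (fun m hm => ?_) (fun m hm => ?_) hn)
  · linarith [hVp m hm, hφ m]
  · rw [appendNonzero_sub, appendNonzero_const_mul]
    linarith [herr m hm, hφT m hm]

/-! ### The expansion of the deviation -/

lemma appendNonzero_one_div_pow_succ_le (hb : 1 ≤ b) (s : ℕ) {n : ℕ} (hn : 1 ≤ n) :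
    appendNonzero b (fun m => 1 / (m : ℝ) ^ (s + 1)) n ≤ (b : ℝ)⁻¹ ^ s / n ^ (s + 1) := by
  calc appendNonzero b (fun m => 1 / (m : ℝ) ^ (s + 1)) n
      ≤ (b - 1) / (b * n : ℝ) ^ (s + 1) := appendNonzero_one_div_pow_le hb (s + 1) hn
    _ ≤ b / (b * n : ℝ) ^ (s + 1) := by gcongr; linarith
    _ = (b : ℝ)⁻¹ ^ s / n ^ (s + 1) := by
        rw [inv_pow, mul_pow, pow_succ (b : ℝ)]
        field_simp

/-- A superposition of the two powers of `b / n` that are small for `n > b` and large for `n < b`,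
respectively: it dominates all intermediate powers, and becomes independent of `b` at `b * n`. -/
noncomputable def decayWeight (b n : ℕ) : ℝ := (b / n : ℝ) ^ 2 + (b / n : ℝ) ^ 5

lemma decayWeight_nonneg (b n : ℕ) : 0 ≤ decayWeight b n := by
  unfold decayWeight
  positivity

lemma pow_le_decayWeight {j : ℕ} (hj : j ∈ Icc 2 5) (b n : ℕ) :
    (b / n : ℝ) ^ j ≤ decayWeight b n := by
  obtain ⟨h2, h5⟩ := mem_Icc.1 hj
  have hx : 0 ≤ (b / n : ℝ) := by positivity
  unfold decayWeight
  rcases le_total (b / n : ℝ) 1 with h | h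
  · exact (pow_le_pow_of_le_one hx h h2).trans (le_add_of_nonneg_right (by positivity))
  · exact (pow_le_pow_right₀ h h5).trans (le_add_of_nonneg_left (by positivity))

lemma appendNonzero_decayWeight_le (hb : 2 ≤ b) {n : ℕ} (hn : 1 ≤ n) :
    appendNonzero b (decayWeight b) n ≤ decayWeight b n / 2 := by
  have hb' : (2 : ℝ) ≤ b := by exact_mod_cast hb
  have hpow (s : ℕ) (hs : 1 ≤ s) :
      appendNonzero b (fun m => (b / m : ℝ) ^ (s + 1)) n ≤ (b / n : ℝ) ^ (s + 1) / 2 := by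
    have hinv : (b : ℝ)⁻¹ ^ s ≤ 1 / 2 := by
      calc (b : ℝ)⁻¹ ^ s ≤ (b : ℝ)⁻¹ ^ 1 :=
            pow_le_pow_of_le_one (by positivity) (inv_le_one_of_one_le₀ (by linarith)) hs
        _ ≤ 1 / 2 := by rw [pow_one, one_div]; gcongr
    simp only [div_pow, div_eq_mul_one_div ((b : ℝ) ^ (s + 1)), appendNonzero_const_mul]
    rw [mul_div_assoc]
    gcongr
    refine (appendNonzero_one_div_pow_succ_le (by lia) s hn).trans ?_
    rw [div_right_comm]
    gcongr
  have hsum := add_le_add (hpow 1 le_rfl) (hpow 4 (by lia))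
  rw [← appendNonzero_add] at hsum
  exact hsum.trans_eq (add_div _ _ _).symm

lemma decayWeight_mul_left (hb : 1 ≤ b) (n : ℕ) :
    decayWeight b (b * n) = 1 / (n : ℝ) ^ 2 + 1 / (n : ℝ) ^ 5 := by
  have hb0 : (b : ℝ) ≠ 0 := by positivity
  rw [decayWeight, Nat.cast_mul, div_mul_cancel_left₀ hb0, inv_pow, inv_pow, one_div, one_div]

lemma decayWeight_mul_left_le (hb : 1 ≤ b) (n : ℕ) :
    decayWeight b (b * n) ≤ decayWeight b n / b ^ 2 := by
  have hb' : (1 : ℝ) ≤ b := by exact_mod_cast hb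
  have hfive : 1 / (n : ℝ) ^ 5 ≤ (b : ℝ) ^ 3 * (1 / (n : ℝ) ^ 5) :=
    le_mul_of_one_le_left (by positivity) (one_le_pow₀ hb')
  have hsplit : decayWeight b n / b ^ 2 =
      1 / (n : ℝ) ^ 2 + (b : ℝ) ^ 3 * (1 / (n : ℝ) ^ 5) := by
    rw [decayWeight]
    field_simp
  rw [decayWeight_mul_left hb, hsplit]
  linarith

/-- The truncated asymptotic expansion `A / n ^ 2 + B / n ^ 3 + C / n ^ 4`. -/
noncomputable def invPowComb (A B C : ℝ) (n : ℕ) : ℝ := A / n ^ 2 + B / n ^ 3 + C / n ^ 4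

lemma invPowComb_mul_left (A B C : ℝ) (b n : ℕ) : invPowComb A B C (b * n) =
    invPowComb ((b : ℝ)⁻¹ ^ 2 * A) ((b : ℝ)⁻¹ ^ 3 * B) ((b : ℝ)⁻¹ ^ 4 * C) n := by
  simp only [invPowComb, Nat.cast_mul, mul_pow, inv_pow, div_eq_mul_inv, mul_inv]
  ring

lemma invPowComb_add (A B C A' B' C' : ℝ) (n : ℕ) : invPowComb (A + A') (B + B') (C + C') n =
    invPowComb A B C n + invPowComb A' B' C' n := by
  simp only [invPowComb]
  ring

lemma abs_invPowComb_le (A B C : ℝ) {n : ℕ} (hn : 1 ≤ n) :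
    |invPowComb A B C n| ≤ (|A| + |B| + |C|) / n := by
  have hn' : (1 : ℝ) ≤ n := by exact_mod_cast hn
  have hterm (x : ℝ) {s : ℕ} (hs : s ≠ 0) : |x / (n : ℝ) ^ s| ≤ |x| / n := by
    rw [abs_div, abs_pow, Nat.abs_cast]
    gcongr
    exact le_self_pow₀ hn' hs
  rw [add_div, add_div]
  exact (abs_add_three _ _ _).trans (add_le_add_three (hterm A two_ne_zero)
    (hterm B three_ne_zero) (hterm C four_ne_zero))

lemma abs_one_div_add_sq_sub_le {y a : ℝ} (hy : 0 < y) (ha : 0 ≤ a) :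
    |1 / (y + a) ^ 2 - (1 / y ^ 2 - 2 * a / y ^ 3 + 3 * a ^ 2 / y ^ 4)| ≤ 4 * a ^ 3 / y ^ 5 := by
  have hrem : 1 / (y + a) ^ 2 - (1 / y ^ 2 - 2 * a / y ^ 3 + 3 * a ^ 2 / y ^ 4) =
      -(a ^ 3 * (4 * y + 3 * a) / (y ^ 4 * (y + a) ^ 2)) := by
    field_simp
    ring
  rw [hrem, abs_neg, abs_of_nonneg (by positivity)]
  calc a ^ 3 * (4 * y + 3 * a) / (y ^ 4 * (y + a) ^ 2)
      ≤ a ^ 3 * (4 * (y + a)) / (y ^ 4 * (y + a) ^ 2) := by gcongr; linarith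
    _ = 4 * a ^ 3 / (y ^ 4 * (y + a)) := by field_simp
    _ ≤ 4 * a ^ 3 / (y ^ 4 * y) := by gcongr; linarith
    _ = 4 * a ^ 3 / y ^ 5 := by ring

lemma sum_Ico_one_cast (hb : 1 ≤ b) : ∑ a ∈ Ico 1 b, (a : ℝ) = b * (b - 1) / 2 := by
  induction b, hb using Nat.le_induction with
  | base => simp
  | succ b hb ih => rw [sum_Ico_succ_top hb, ih]; push_cast; ring

lemma sum_Ico_one_cast_sq (hb : 1 ≤ b) :
    ∑ a ∈ Ico 1 b, (a : ℝ) ^ 2 = b * (b - 1) * (2 * b - 1) / 6 := by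
  induction b, hb using Nat.le_induction with
  | base => simp
  | succ b hb ih => rw [sum_Ico_succ_top hb, ih]; push_cast; ring

lemma abs_appendNonzero_one_div_sq_sub_le (hb : 1 ≤ b) {t : ℝ} (ht : t = (b : ℝ)⁻¹) {n : ℕ}
    (hn : 1 ≤ n) :
    |appendNonzero b (fun m => 1 / (m : ℝ) ^ 2) n -
      invPowComb (t - t ^ 2) (-(t - t ^ 2)) (t * (1 - t) * (2 - t) / 2) n| ≤ 4 * t / n ^ 5 := by
  have hy : (0 : ℝ) < b * n := by positivity
  have hmain : invPowComb (t - t ^ 2) (-(t - t ^ 2)) (t * (1 - t) * (2 - t) / 2) n =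
      ∑ a ∈ Ico 1 b,
        (1 / (b * n : ℝ) ^ 2 - 2 * a / (b * n : ℝ) ^ 3 + 3 * a ^ 2 / (b * n : ℝ) ^ 4) := by
    rw [sum_add_distrib, sum_sub_distrib, ← sum_div, ← sum_div, ← sum_div, ← mul_sum, ← mul_sum,
      sum_Ico_one_cast hb, sum_Ico_one_cast_sq hb, sum_const, Nat.card_Ico, nsmul_eq_mul,
      Nat.cast_sub hb, Nat.cast_one, invPowComb, ht]
    field_simp
    ring
  calc |appendNonzero b (fun m => 1 / (m : ℝ) ^ 2) n - _|
      ≤ ∑ a ∈ Ico 1 b, 4 * (a : ℝ) ^ 3 / (b * n : ℝ) ^ 5 := by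
        rw [hmain, appendNonzero, ← sum_sub_distrib]
        refine (abs_sum_le_sum_abs _ _).trans (sum_le_sum fun a _ => ?_)
        push_cast
        exact abs_one_div_add_sq_sub_le hy a.cast_nonneg
    _ ≤ ∑ a ∈ range b, 4 * (b : ℝ) ^ 3 / (b * n : ℝ) ^ 5 := by
        refine (sum_le_sum fun a ha => ?_).trans (sum_le_sum_of_subset_of_nonneg
          (fun a ha => mem_range.2 (mem_Ico.1 ha).2) fun _ _ _ => by positivity)
        gcongr
        exact (mem_Ico.1 ha).2.le
    _ = 4 * t / n ^ 5 := by
        rw [sum_const, card_range, nsmul_eq_mul, ht]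
        field_simp

lemma abs_appendNonzero_invPowComb_sub_le (hb : 1 ≤ b) {t : ℝ} (ht : t = (b : ℝ)⁻¹) (A B C : ℝ)
    {n : ℕ} (hn : 1 ≤ n) :
    |appendNonzero b (invPowComb A B C) n - invPowComb ((t - t ^ 2) * A) (-(t - t ^ 2) * A)
        (t * (1 - t) * (2 - t) / 2 * A) n| ≤
      |A| * (4 * t / n ^ 5) + |B| * (t ^ 2 / n ^ 3) + |C| * (t ^ 3 / n ^ 4) := by
  set S : ℕ → ℝ := fun s => appendNonzero b (fun m => 1 / (m : ℝ) ^ s) n with hS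
  have habs (s : ℕ) : |S (s + 1)| ≤ t ^ s / n ^ (s + 1) := by
    rw [abs_of_nonneg (sum_nonneg fun a _ => by positivity), ht]
    exact appendNonzero_one_div_pow_succ_le hb s hn
  have hcomb : appendNonzero b (invPowComb A B C) n = A * S 2 + B * S 3 + C * S 4 := by
    simp only [hS, ← appendNonzero_const_mul, ← appendNonzero_add, mul_one_div]
    rfl
  have hsplit : appendNonzero b (invPowComb A B C) n - invPowComb ((t - t ^ 2) * A)
      (-(t - t ^ 2) * A) (t * (1 - t) * (2 - t) / 2 * A) n =
      A * (S 2 - invPowComb (t - t ^ 2) (-(t - t ^ 2)) (t * (1 - t) * (2 - t) / 2) n)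
        + B * S 3 + C * S 4 := by
    rw [hcomb, invPowComb, invPowComb]
    ring
  rw [hsplit]
  refine (abs_add_three _ _ _).trans ?_
  rw [abs_mul, abs_mul, abs_mul]
  gcongr
  exacts [abs_appendNonzero_one_div_sq_sub_le hb ht hn, habs 2, habs 3]

lemma abs_log_one_add_sub_le {z : ℝ} (hz : |z| ≤ 1 / 2) :
    |Real.log (1 + z) - (z - z ^ 2 / 2 + z ^ 3 / 3)| ≤ 2 * z ^ 4 := by
  have h := Real.abs_log_sub_add_sum_range_le (x := -z) (by rw [abs_neg]; linarith) 3
  rw [abs_neg, sub_neg_eq_add] at h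
  calc |Real.log (1 + z) - (z - z ^ 2 / 2 + z ^ 3 / 3)| = _ := by
        congr 1
        simp only [sum_range_succ, sum_range_zero]
        push_cast
        ring
    _ ≤ |z| ^ 4 / (1 - |z|) := h
    _ ≤ |z| ^ 4 / (1 / 2) := by gcongr; linarith
    _ = 2 * z ^ 4 := by rw [Even.pow_abs (by decide)]; ring

lemma abs_one_div_sub_logProfile_mul_left_sub_le (hb : 2 ≤ b) {t : ℝ} (ht : t = (b : ℝ)⁻¹) {n : ℕ}
    (hn : 1 ≤ n) :
    |1 / n - logProfile b (b * n) - invPowComb (t / 2) (-t ^ 2 / 3) 0 n| ≤ 2 * t ^ 3 / n ^ 4 := by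
  have hb' : (2 : ℝ) ≤ b := by exact_mod_cast hb
  have hn' : (1 : ℝ) ≤ n := by exact_mod_cast hn
  set z : ℝ := 1 / (b * n) with hz
  have hz_le : |z| ≤ 1 / 2 := by
    rw [abs_of_nonneg (by positivity), hz]
    gcongr
    nlinarith
  have hprofile : logProfile b (b * n) = b * Real.log (1 + z) := by
    rw [logProfile_eq_mul_log (Nat.mul_pos (by lia) hn), Nat.cast_mul]
  have hmain : 1 / n - invPowComb (t / 2) (-t ^ 2 / 3) 0 n = b * (z - z ^ 2 / 2 + z ^ 3 / 3) := by
    rw [invPowComb, hz, ht]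
    field_simp
    ring
  calc |1 / n - logProfile b (b * n) - invPowComb (t / 2) (-t ^ 2 / 3) 0 n|
      = |b * (Real.log (1 + z) - (z - z ^ 2 / 2 + z ^ 3 / 3))| := by
        rw [← abs_neg]
        congr 1
        linear_combination hprofile - hmain
    _ ≤ b * (2 * z ^ 4) := by
        rw [abs_mul, Nat.abs_cast]
        exact mul_le_mul_of_nonneg_left (abs_log_one_add_sub_le hz_le) b.cast_nonneg
    _ = 2 * t ^ 3 / n ^ 4 := by
        rw [hz, ht]
        field_simp

lemma one_div_pow_le_inv_pow_mul_decayWeight (hb : 1 ≤ b) {j : ℕ} (hj : j ∈ Icc 2 5) (n : ℕ) :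
    1 / (n : ℝ) ^ j ≤ (b : ℝ)⁻¹ ^ j * decayWeight b n := by
  have hb0 : (b : ℝ) ≠ 0 := by positivity
  calc 1 / (n : ℝ) ^ j = (b : ℝ)⁻¹ ^ j * (b / n : ℝ) ^ j := by
        rw [← mul_pow, inv_mul_eq_div, div_div_cancel_left' hb0, inv_pow, one_div]
    _ ≤ (b : ℝ)⁻¹ ^ j * decayWeight b n := by gcongr; exact pow_le_decayWeight hj b n

lemma one_sub_add_sq_pos (t : ℝ) : 0 < 1 - t + t ^ 2 := by
  nlinarith [sq_nonneg (t - 1 / 2)]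

/-- The coefficient of `t ^ (2 * k + 1) / n ^ 2`, where `t = 1 / b`, in the large-`n` expansion of
`deviation b k n`. -/
noncomputable def coeffTwo (k : ℕ) (t : ℝ) : ℝ := 1 / (2 * (1 - t + t ^ 2) ^ (k + 1))

/-- The coefficient of `t ^ (2 * k + 2) / n ^ 3`, where `t = 1 / b`, in the large-`n` expansion of
`deviation b k n`, up to `O(t ^ 2)`. -/
noncomputable def coeffThree : ℕ → ℝ → ℝ
  | 0, t => -1 / 3 - (1 - t) * coeffTwo 0 t
  | k + 1, t => t * coeffThree k t - (1 - t) * coeffTwo (k + 1) t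

/-- The coefficient of `t ^ (2 * k + 2) / n ^ 4`, where `t = 1 / b`, in the large-`n` expansion of
`deviation b k n`, up to `O(t)`. -/
noncomputable def coeffFour : ℕ → ℝ → ℝ
  | 0, t => (1 - t) * (2 - t) / 2 * coeffTwo 0 t
  | k + 1, t => t ^ 2 * coeffFour k t + (1 - t) * (2 - t) / 2 * coeffTwo (k + 1) t

lemma coeffTwo_zero_mul (t : ℝ) : coeffTwo 0 t * (1 - t + t ^ 2) = 1 / 2 := by
  have := (one_sub_add_sq_pos t).ne'
  rw [coeffTwo]
  field_simp
  ring

lemma coeffTwo_succ_mul (k : ℕ) (t : ℝ) :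
    coeffTwo (k + 1) t * (1 - t + t ^ 2) = coeffTwo k t := by
  have := (one_sub_add_sq_pos t).ne'
  rw [coeffTwo, coeffTwo]
  field_simp
  ring

lemma continuous_coeffTwo (k : ℕ) : Continuous (coeffTwo k) := by
  unfold coeffTwo
  exact continuous_const.div (by fun_prop) fun t =>
    (mul_pos two_pos (pow_pos (one_sub_add_sq_pos t) _)).ne'

lemma continuous_coeffThree : ∀ k, Continuous (coeffThree k)
  | 0 => continuous_const.sub ((continuous_const.sub continuous_id).mul (continuous_coeffTwo 0))
  | k + 1 => (continuous_id.mul (continuous_coeffThree k)).sub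
      ((continuous_const.sub continuous_id).mul (continuous_coeffTwo (k + 1)))

lemma continuous_coeffFour (k : ℕ) : Continuous (coeffFour k) := by
  have hfactor : Continuous fun t : ℝ => (1 - t) * (2 - t) / 2 := by fun_prop
  induction k with
  | zero => exact hfactor.mul (continuous_coeffTwo 0)
  | succ k ih =>
    exact ((continuous_pow 2).mul ih).add (hfactor.mul (continuous_coeffTwo (k + 1)))

lemma exists_abs_coeff_le (k : ℕ) : ∃ M, 0 ≤ M ∧ ∀ t ∈ Set.Icc (0 : ℝ) 1,
    |coeffTwo k t| ≤ M ∧ |coeffThree k t| ≤ M ∧ |coeffFour k t| ≤ M := by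
  have hcont : Continuous fun t => |coeffTwo k t| + |coeffThree k t| + |coeffFour k t| :=
    ((continuous_coeffTwo k).abs.add (continuous_coeffThree k).abs).add (continuous_coeffFour k).abs
  obtain ⟨M, hM⟩ := isCompact_Icc.exists_bound_of_continuousOn
    (hcont.continuousOn (s := Set.Icc (0 : ℝ) 1))
  have hsum (t : ℝ) (ht : t ∈ Set.Icc (0 : ℝ) 1) :
      |coeffTwo k t| + |coeffThree k t| + |coeffFour k t| ≤ M :=
    (le_abs_self _).trans (hM t ht)
  refine ⟨M, (by positivity : (0 : ℝ) ≤ _).trans (hsum 0 (by simp)), fun t ht => ?_⟩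
  have h2 := abs_nonneg (coeffTwo k t)
  have h3 := abs_nonneg (coeffThree k t)
  have h4 := abs_nonneg (coeffFour k t)
  have h := hsum t ht
  exact ⟨by linarith, by linarith, by linarith⟩

/-- The truncated large-`n` expansion of `deviation b k n`, where `t = 1 / b`. -/
noncomputable def deviationExpansion (t : ℝ) (k n : ℕ) : ℝ :=
  invPowComb (t ^ (2 * k + 1) * coeffTwo k t) (t ^ (2 * k + 2) * coeffThree k t)
    (t ^ (2 * k + 2) * coeffFour k t) n

/-- The truncated large-`n` expansion of `appendNonzero b (deviationExpansion t k) n`, where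
`t = 1 / b`. -/
noncomputable def appendedExpansion (t : ℝ) (k n : ℕ) : ℝ :=
  invPowComb ((t - t ^ 2) * (t ^ (2 * k + 1) * coeffTwo k t))
    (-(t - t ^ 2) * (t ^ (2 * k + 1) * coeffTwo k t))
    (t * (1 - t) * (2 - t) / 2 * (t ^ (2 * k + 1) * coeffTwo k t)) n

lemma deviationExpansion_zero (t : ℝ) (n : ℕ) :
    deviationExpansion t 0 n = invPowComb (t / 2) (-t ^ 2 / 3) 0 n + appendedExpansion t 0 n := by
  rw [deviationExpansion, appendedExpansion, ← invPowComb_add, coeffThree, coeffFour]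
  congr 1
  · linear_combination t * coeffTwo_zero_mul t
  · ring
  · ring

lemma deviationExpansion_succ {t : ℝ} (ht : t = (b : ℝ)⁻¹) (k n : ℕ) :
    deviationExpansion t (k + 1) n =
      deviationExpansion t k (b * n) + appendedExpansion t (k + 1) n := by
  rw [deviationExpansion, deviationExpansion, invPowComb_mul_left, ← ht, appendedExpansion,
    ← invPowComb_add, coeffThree, coeffFour]
  congr 1
  · linear_combination t ^ (2 * k + 3) * coeffTwo_succ_mul k t
  · ring
  · ring

lemma exists_abs_appendNonzero_deviationExpansion_sub_le (k : ℕ) : ∃ M, 0 ≤ M ∧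
    ∀ b : ℕ, 1 ≤ b → ∀ t : ℝ, t = (b : ℝ)⁻¹ → ∀ n : ℕ, 1 ≤ n →
      |appendNonzero b (deviationExpansion t k) n - appendedExpansion t k n| ≤
        M * (t ^ (2 * k + 7) * decayWeight b n) := by
  obtain ⟨M, hM0, hM⟩ := exists_abs_coeff_le k
  refine ⟨6 * M, by positivity, fun b hb t ht n hn => ?_⟩
  have ht0 : 0 ≤ t := by rw [ht]; positivity
  have ht1 : t ≤ 1 := by rw [ht]; exact inv_le_one_of_one_le₀ (by exact_mod_cast hb)
  obtain ⟨hM2, hM3, hM4⟩ := hM t ⟨ht0, ht1⟩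
  have hw := decayWeight_nonneg b n
  have hterm {x : ℝ} (hx : |x| ≤ M) (i j : ℕ) (hj : j ∈ Icc 2 5) :
      |t ^ i * x| * (1 / (n : ℝ) ^ j) ≤ M * (t ^ (i + j) * decayWeight b n) := by
    have hj' := one_div_pow_le_inv_pow_mul_decayWeight hb hj n
    rw [← ht] at hj'
    calc |t ^ i * x| * (1 / (n : ℝ) ^ j) ≤ (t ^ i * M) * (t ^ j * decayWeight b n) := by
          rw [abs_mul, abs_of_nonneg (pow_nonneg ht0 i)]
          gcongr
      _ = M * (t ^ (i + j) * decayWeight b n) := by ring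
  have h2 := hterm hM2 (2 * k + 1) 5 (by decide)
  have h3 := hterm hM3 (2 * k + 2) 3 (by decide)
  have h4 := hterm hM4 (2 * k + 2) 4 (by decide)
  calc _ ≤ _ := abs_appendNonzero_invPowComb_sub_le hb ht _ _ _ hn
    _ = 4 * t * (|t ^ (2 * k + 1) * coeffTwo k t| * (1 / (n : ℝ) ^ 5))
        + t ^ 2 * (|t ^ (2 * k + 2) * coeffThree k t| * (1 / (n : ℝ) ^ 3))
        + t ^ 3 * (|t ^ (2 * k + 2) * coeffFour k t| * (1 / (n : ℝ) ^ 4)) := by ring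
    _ ≤ 4 * t * (M * (t ^ (2 * k + 1 + 5) * decayWeight b n))
        + t ^ 2 * (M * (t ^ (2 * k + 2 + 3) * decayWeight b n))
        + t ^ 3 * (M * (t ^ (2 * k + 2 + 4) * decayWeight b n)) := by gcongr
    _ = (5 + t ^ 2) * M * (t ^ (2 * k + 7) * decayWeight b n) := by ring
    _ ≤ 6 * M * (t ^ (2 * k + 7) * decayWeight b n) := by
        gcongr
        linarith [pow_le_one₀ ht0 ht1 (n := 2)]

lemma exists_abs_deviation_sub_le_of_source (k : ℕ) : ∃ M, 0 ≤ M ∧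
    ∀ b : ℕ, 2 ≤ b → ∀ t : ℝ, t = (b : ℝ)⁻¹ → ∀ (H : ℕ → ℝ) (K : ℝ), 0 ≤ K →
      (∀ n, 1 ≤ n → deviation b k n = H n + appendNonzero b (deviation b k) n) →
      (∀ n, 1 ≤ n → |H n + appendedExpansion t k n - deviationExpansion t k n| ≤
        K * (t ^ (2 * k + 7) * decayWeight b n)) →
      ∀ n, 1 ≤ n → |deviation b k n - deviationExpansion t k n| ≤
        2 * (K + M) * (t ^ (2 * k + 7) * decayWeight b n) := by
  obtain ⟨M, hM0, hM⟩ := exists_abs_appendNonzero_deviationExpansion_sub_le k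
  refine ⟨M, hM0, fun b hb t ht H K hK hV hH n hn => ?_⟩
  have ht0 : 0 ≤ t := by rw [ht]; positivity
  set c : ℝ := (K + M) * t ^ (2 * k + 7) with hc
  have hc0 : 0 ≤ c := by positivity
  set B : ℝ := |t ^ (2 * k + 1) * coeffTwo k t| + |t ^ (2 * k + 2) * coeffThree k t|
    + |t ^ (2 * k + 2) * coeffFour k t|
  have hVp (m : ℕ) (hm : 1 ≤ m) :
      |deviation b k m - deviationExpansion t k m| ≤ (b + B) / m := by
    rw [add_div]
    exact (abs_sub _ _).trans (add_le_add (abs_deviation_le hb k hm) (abs_invPowComb_le _ _ _ hm))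
  have hres (m : ℕ) (hm : 1 ≤ m) :
      |H m + appendNonzero b (deviationExpansion t k) m - deviationExpansion t k m| ≤
        c * decayWeight b m := by
    calc _ = |(H m + appendedExpansion t k m - deviationExpansion t k m)
            + (appendNonzero b (deviationExpansion t k) m - appendedExpansion t k m)| := by
          congr 1; ring
      _ ≤ K * (t ^ (2 * k + 7) * decayWeight b m) + M * (t ^ (2 * k + 7) * decayWeight b m) :=
          (abs_add_le _ _).trans (add_le_add (hH m hm) (hM b (by lia) t ht m hm))
      _ = c * decayWeight b m := by rw [hc]; ring
  have hφT (m : ℕ) (hm : 1 ≤ m) :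
      appendNonzero b (fun j => c * decayWeight b j) m ≤ c * decayWeight b m / 2 := by
    rw [appendNonzero_const_mul, mul_div_assoc]
    exact mul_le_mul_of_nonneg_left (appendNonzero_decayWeight_le hb hm) hc0
  refine (abs_sub_le_of_residual_le (φ := fun m => c * decayWeight b m) (by lia) hV hVp
    (fun m => mul_nonneg hc0 (decayWeight_nonneg b m)) hφT hres hn).trans_eq ?_
  rw [hc]
  ring

theorem exists_abs_deviation_sub_deviationExpansion_le (k : ℕ) : ∃ K, 0 ≤ K ∧
    ∀ b : ℕ, 2 ≤ b → ∀ t : ℝ, t = (b : ℝ)⁻¹ → ∀ n : ℕ, 1 ≤ n →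
      |deviation b k n - deviationExpansion t k n| ≤
        K * (t ^ (2 * k + 7) * decayWeight b n) := by
  induction k with
  | zero =>
    obtain ⟨M, hM0, hM⟩ := exists_abs_deviation_sub_le_of_source 0
    refine ⟨2 * (2 + M), by positivity, fun b hb t ht =>
      hM b hb t ht _ 2 two_pos.le (fun n hn => deviation_zero hb hn) fun n hn => ?_⟩
    have ht0 : 0 ≤ t := by rw [ht]; positivity
    have hpow := one_div_pow_le_inv_pow_mul_decayWeight (b := b) (by lia) (j := 4) (by decide) n
    rw [← ht] at hpow
    rw [deviationExpansion_zero, add_sub_add_right_eq_sub]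
    calc _ ≤ 2 * t ^ 3 / (n : ℝ) ^ 4 := abs_one_div_sub_logProfile_mul_left_sub_le hb ht hn
      _ = 2 * t ^ 3 * (1 / (n : ℝ) ^ 4) := by ring
      _ ≤ 2 * t ^ 3 * (t ^ 4 * decayWeight b n) := by gcongr
      _ = 2 * (t ^ (2 * 0 + 7) * decayWeight b n) := by ring
  | succ k ih =>
    obtain ⟨K, hK0, hK⟩ := ih
    obtain ⟨M, hM0, hM⟩ := exists_abs_deviation_sub_le_of_source (k + 1)
    refine ⟨2 * (K + M), by positivity, fun b hb t ht =>
      hM b hb t ht _ K hK0 (fun n hn => deviation_succ hb k hn) fun n hn => ?_⟩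
    have ht0 : 0 ≤ t := by rw [ht]; positivity
    rw [deviationExpansion_succ ht, add_sub_add_right_eq_sub]
    calc _ ≤ K * (t ^ (2 * k + 7) * decayWeight b (b * n)) :=
          hK b hb t ht _ (Nat.mul_pos (by lia) hn)
      _ ≤ K * (t ^ (2 * k + 7) * (decayWeight b n / b ^ 2)) := by
          gcongr
          exact decayWeight_mul_left_le (by lia) n
      _ = K * (t ^ (2 * (k + 1) + 7) * decayWeight b n) := by rw [ht, inv_pow, inv_pow]; ring

/-! ### Summation over `n` -/

lemma hasSum_zetaR {s : ℕ} (hs : 2 ≤ s) :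
    HasSum (fun n : ℕ => 1 / ((n : ℝ) + 1) ^ s) (zetaR s) := by
  have h := (summable_nat_add_iff 1).2 (Real.summable_one_div_nat_pow.2 hs)
  simp only [Nat.cast_add_one] at h
  exact h.hasSum

lemma hasSum_invPowComb (A B C : ℝ) : HasSum (fun n => invPowComb A B C (n + 1))
    (A * zetaR 2 + B * zetaR 3 + C * zetaR 4) := by
  have h := (((hasSum_zetaR le_rfl).mul_left A).add
    ((hasSum_zetaR (s := 3) (by lia)).mul_left B)).add ((hasSum_zetaR (s := 4) (by lia)).mul_left C)
  simpa only [invPowComb, Nat.cast_add_one, mul_one_div] using h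

lemma summable_decayWeight (b : ℕ) : Summable fun n => decayWeight b (n + 1) := by
  have h := ((hasSum_zetaR le_rfl).summable.mul_left ((b : ℝ) ^ 2)).add
    ((hasSum_zetaR (s := 5) (by lia)).summable.mul_left ((b : ℝ) ^ 5))
  simpa only [decayWeight, Nat.cast_add_one, div_pow, mul_one_div] using h

lemma hasSum_decayWeight_mul_left (hb : 1 ≤ b) :
    HasSum (fun n => decayWeight b (b * (n + 1))) (zetaR 2 + zetaR 5) := by
  have h := (hasSum_zetaR le_rfl).add (hasSum_zetaR (s := 5) (by lia))
  simpa only [decayWeight_mul_left hb, Nat.cast_add_one] using h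

lemma summable_deviation (hb : 2 ≤ b) (k : ℕ) : Summable (deviation b k) := by
  obtain ⟨K, -, hK⟩ := exists_abs_deviation_sub_deviationExpansion_le k
  have hdiff : Summable fun n =>
      deviation b k (n + 1) - deviationExpansion (b : ℝ)⁻¹ k (n + 1) :=
    (((summable_decayWeight b).mul_left ((b : ℝ)⁻¹ ^ (2 * k + 7))).mul_left K).of_norm_bounded
      fun n => hK b hb _ rfl (n + 1) (by lia)
  have hexp : Summable fun n => deviationExpansion (b : ℝ)⁻¹ k (n + 1) :=
    (hasSum_invPowComb _ _ _).summable
  exact (summable_nat_add_iff 1).1 ((hdiff.add hexp).congr fun n => sub_add_cancel _ _)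

lemma hasSum_add_appendNonzero (hb : 1 ≤ b) {f : ℕ → ℝ} {S : ℝ} (hf : HasSum f S) :
    HasSum (fun n => f (b * n) + appendNonzero b f n) S := by
  have : NeZero b := ⟨by lia⟩
  refine (((Nat.divModEquiv b).symm.hasSum_iff.2 hf).prod_fiberwise
    fun n => hasSum_fintype _).congr_fun fun n => ?_
  rw [← sum_Ico_mul_eq_add_appendNonzero (by lia), sum_Ico_eq_sum_range, mul_add_one,
    Nat.add_sub_cancel_left, ← Fin.sum_univ_eq_sum_range (fun a => f (b * n + a))]
  exact sum_congr rfl fun a _ => by rw [mul_comm b n]; rfl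

lemma hasSum_sub_appendNonzero (hb : 1 ≤ b) {f : ℕ → ℝ} (hf : Summable f) :
    HasSum (fun n => f (n + 1) - appendNonzero b f (n + 1) - f (b * (n + 1)))
      (appendNonzero b f 0) := by
  have htail := (hasSum_nat_add_iff' 1).2 hf.hasSum
  have hblocks := (hasSum_nat_add_iff' 1).2 (hasSum_add_appendNonzero hb hf.hasSum)
  have h := (htail.sub hblocks).congr_fun fun n =>
    (by ring : f (n + 1) - appendNonzero b f (n + 1) - f (b * (n + 1)) = _)
  simpa only [sum_range_one, mul_zero, sub_sub_sub_cancel_left, add_sub_cancel_left] using h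

lemma hasSum_deviation_sub_deviation (hb : 2 ≤ b) (k : ℕ) :
    HasSum (fun n => deviation b k (b * (n + 1)) - deviation b (k + 1) (b * (n + 1)))
      (irwinSum b 0 (k + 1) - b * Real.log b) := by
  rw [← appendNonzero_deviation_zero hb]
  refine (hasSum_sub_appendNonzero (by lia) (summable_deviation hb (k + 1))).congr_fun fun n => ?_
  rw [deviation_succ hb k (by lia : 1 ≤ n + 1), add_sub_cancel_right]

/-- The sum of `deviationExpansion t k (b * n)` over `n ≥ 1`, where `t = 1 / b`. -/
noncomputable def zetaExpansion (k : ℕ) (t : ℝ) : ℝ :=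
  t ^ (2 * k + 3) * coeffTwo k t * zetaR 2 + t ^ (2 * k + 5) * coeffThree k t * zetaR 3
    + t ^ (2 * k + 6) * coeffFour k t * zetaR 4

lemma hasSum_deviationExpansion_mul_left {t : ℝ} (ht : t = (b : ℝ)⁻¹) (k : ℕ) :
    HasSum (fun n => deviationExpansion t k (b * (n + 1))) (zetaExpansion k t) := by
  simp only [deviationExpansion, invPowComb_mul_left, ← ht]
  convert hasSum_invPowComb _ _ _ using 1
  rw [zetaExpansion]
  ring

lemma exists_abs_irwinSum_zero_succ_sub_le (k : ℕ) : ∃ K, ∀ b : ℕ, 2 ≤ b → ∀ t : ℝ,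
    t = (b : ℝ)⁻¹ →
      |irwinSum b 0 (k + 1) - b * Real.log b - (zetaExpansion k t - zetaExpansion (k + 1) t)| ≤
        K * t ^ (2 * k + 7) := by
  obtain ⟨K, -, hK⟩ := exists_abs_deviation_sub_deviationExpansion_le k
  obtain ⟨K', hK0', hK'⟩ := exists_abs_deviation_sub_deviationExpansion_le (k + 1)
  refine ⟨(K + K') * (zetaR 2 + zetaR 5), fun b hb t ht => ?_⟩
  have ht0 : 0 ≤ t := by rw [ht]; positivity
  have ht1 : t ≤ 1 := by rw [ht]; exact inv_le_one_of_one_le₀ (by exact_mod_cast (by lia : 1 ≤ b))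
  have hsum := (hasSum_deviation_sub_deviation hb k).sub
    ((hasSum_deviationExpansion_mul_left ht k).sub (hasSum_deviationExpansion_mul_left ht (k + 1)))
  have hbound := (hasSum_decayWeight_mul_left (b := b) (by lia)).mul_left
    ((K + K') * t ^ (2 * k + 7))
  refine (hsum.norm_le_of_bounded hbound fun n => ?_).trans_eq (by ring)
  have hbn : 1 ≤ b * (n + 1) := Nat.mul_pos (by lia) n.succ_pos
  have hw := decayWeight_nonneg b (b * (n + 1))
  have hpow : t ^ (2 * (k + 1) + 7) ≤ t ^ (2 * k + 7) := pow_le_pow_of_le_one ht0 ht1 (by lia)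
  rw [sub_sub_sub_comm, Real.norm_eq_abs]
  calc _ ≤ K * (t ^ (2 * k + 7) * decayWeight b (b * (n + 1)))
        + K' * (t ^ (2 * (k + 1) + 7) * decayWeight b (b * (n + 1))) :=
        (abs_sub _ _).trans (add_le_add (hK b hb t ht _ hbn) (hK' b hb t ht _ hbn))
    _ ≤ K * (t ^ (2 * k + 7) * decayWeight b (b * (n + 1)))
        + K' * (t ^ (2 * k + 7) * decayWeight b (b * (n + 1))) := by
        gcongr
    _ = (K + K') * t ^ (2 * k + 7) * decayWeight b (b * (n + 1)) := by ring

end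

theorem irwinSum_zero_succ_asymptotic (k : ℕ) :
    (fun b : ℕ => irwinSum b 0 (k + 1) - b * Real.log b -
      (zetaExpansion k (b : ℝ)⁻¹ - zetaExpansion (k + 1) (b : ℝ)⁻¹))
      =O[atTop] fun b : ℕ => (b : ℝ)⁻¹ ^ (2 * k + 7) := by
  obtain ⟨K, hK⟩ := exists_abs_irwinSum_zero_succ_sub_le k
  refine IsBigO.of_bound K ((eventually_ge_atTop 2).mono fun b hb => ?_)
  rw [Real.norm_eq_abs, Real.norm_of_nonneg (by positivity)]
  exact hK b hb _ rfl

/-! ### Expansion in powers of `1 / b` -/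

lemma isBigO_pow_of_eq_pow_mul {f g : ℝ → ℝ} (m : ℕ) (hfg : ∀ t, f t = t ^ m * g t)
    (hg : ContinuousAt g 0) : f =O[𝓝 0] fun t => t ^ m := by
  have h := (isBigO_refl (fun t : ℝ => t ^ m) (𝓝 0)).mul (hg.isBigO_one ℝ)
  simpa only [mul_one, ← hfg] using h

lemma coeffTwo_one_sub_isBigO :
    (fun t : ℝ => coeffTwo 1 t - t ^ 2 * coeffTwo 2 t - (1 / 2 + t - 5 / 2 * t ^ 3))
      =O[𝓝 0] fun t => t ^ 4 := by
  refine isBigO_pow_of_eq_pow_mul (g := fun t => -(7 - 21 * t + 30 * t ^ 2 - 28 * t ^ 3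
    + 15 * t ^ 4 - 5 * t ^ 5) / (2 * (1 - t + t ^ 2) ^ 3)) 4 (fun t => ?_) ?_
  · have := (one_sub_add_sq_pos t).ne'
    simp only [coeffTwo]
    field_simp
    ring
  · exact ContinuousAt.div (by fun_prop) (by fun_prop) (by norm_num)

lemma coeffThree_one_sub_isBigO :
    (fun t : ℝ => coeffThree 1 t - (-1 / 2 - 4 / 3 * t)) =O[𝓝 0] fun t => t ^ 2 := by
  refine isBigO_pow_of_eq_pow_mul
    (g := fun t => (1 + 2 * t - 2 * t ^ 2 + 2 * t ^ 3) / (2 * (1 - t + t ^ 2) ^ 2)) 2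
    (fun t => ?_) ?_
  · have := (one_sub_add_sq_pos t).ne'
    simp only [coeffThree, coeffTwo]
    field_simp
    ring
  · exact ContinuousAt.div (by fun_prop) (by fun_prop) (by norm_num)

lemma coeffFour_one_sub_isBigO :
    (fun t : ℝ => coeffFour 1 t - 1 / 2) =O[𝓝 0] fun t => t := by
  have h := isBigO_pow_of_eq_pow_mul (f := fun t => coeffFour 1 t - 1 / 2)
    (g := fun t => (t * ((1 - t) * (2 - t) / 2) * (1 - t + t ^ 2) + 1 / 2 - 5 / 2 * t + 2 * t ^ 2
      - t ^ 3) / (2 * (1 - t + t ^ 2) ^ 2)) 1 (fun t => ?_) ?_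
  · simpa only [pow_one] using h
  · have := (one_sub_add_sq_pos t).ne'
    simp only [coeffFour, coeffTwo]
    field_simp
    ring
  · exact ContinuousAt.div (by fun_prop) (by fun_prop) (by norm_num)

lemma zetaExpansion_one_sub_two_isBigO :
    (fun t : ℝ => zetaExpansion 1 t - zetaExpansion 2 t - (zetaR 2 / 2 * t ^ 5 + zetaR 2 * t ^ 6
      - zetaR 3 / 2 * t ^ 7 - (15 * zetaR 2 + 8 * zetaR 3 - 3 * zetaR 4) / 6 * t ^ 8))
      =O[𝓝 0] fun t => t ^ 9 := by
  have hpow (m : ℕ) : (fun t : ℝ => t ^ m) =O[𝓝 0] fun t => t ^ m := isBigO_refl _ _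
  have h2 := ((hpow 5).mul coeffTwo_one_sub_isBigO).const_mul_left (zetaR 2)
  have h3 := ((hpow 7).mul coeffThree_one_sub_isBigO).const_mul_left (zetaR 3)
  have h4 := ((hpow 8).mul coeffFour_one_sub_isBigO).const_mul_left (zetaR 4)
  have hcont : Continuous fun t => -(coeffThree 2 t * zetaR 3 + t * coeffFour 2 t * zetaR 4) :=
    (((continuous_coeffThree 2).mul_const _).add
      ((continuous_id.mul (continuous_coeffFour 2)).mul_const _)).neg
  have hrest := isBigO_pow_of_eq_pow_mul 9 (fun _ => rfl) hcont.continuousAt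
  simp only [← pow_add, ← pow_succ, Nat.reduceAdd] at h2 h3 h4
  refine (((h2.add h3).add h4).add hrest).congr_left fun t => ?_
  rw [zetaExpansion, zetaExpansion]
  ring

theorem irwin_zero_two_asymptotic :
    (fun b : ℕ => irwinSum b 0 2 -
      ((b : ℝ) * Real.log b + zetaR 2 / (2 * (b : ℝ) ^ 5) + zetaR 2 / (b : ℝ) ^ 6
        - zetaR 3 / (2 * (b : ℝ) ^ 7)
        - (15 * zetaR 2 + 8 * zetaR 3 - 3 * zetaR 4) / (6 * (b : ℝ) ^ 8)))
      =O[atTop] fun b : ℕ => ((b : ℝ) ^ 9)⁻¹ := by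
  have hexpansion := zetaExpansion_one_sub_two_isBigO.comp_tendsto
    (tendsto_inv_atTop_nhds_zero_nat (𝕜 := ℝ))
  refine ((irwinSum_zero_succ_asymptotic 1).add hexpansion).congr (fun b => ?_)
    fun b => inv_pow _ _
  simp only [Function.comp_apply, div_eq_mul_inv, mul_inv, inv_pow]
  ring
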